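/- arXiv:1408.3859 — 2 statements merged into one kernel-verified Lean document; each statement's English description precedes it below -/
import Mathlib

section
/- Let X be a compact Hausdorff topological space, f : X → X a minimal homeomorphism, and K ⊆ X a compact set with nonempty interior. For x ∈ X set ℓ⁺(x) = min{j ≥ 0 : f^j(x) ∈ int K}, ℓ⁻(x) = min{j > 0 : f^{-j}(x) ∈ int K}, L(x) = {j ∈ ℤ : −ℓ⁻(x) < j < ℓ⁺(x) and f^j(x) ∈ ∂K}, and X_i = {x ∈ X : #L(x) ≥ i}. Then each set X_i is closed in X. -/
/-- `ℓ⁺(x) = min {j ≥ 0 : f^j(x) ∈ int K}`. -/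
noncomputable def ellPlus {X : Type*} [TopologicalSpace X] (f : X ≃ₜ X) (K : Set X)
    (x : X) : ℕ :=
  sInf {j : ℕ | (⇑f)^[j] x ∈ interior K}

/-- `ℓ⁻(x) = min {j > 0 : f^{-j}(x) ∈ int K}`. -/
noncomputable def ellMinus {X : Type*} [TopologicalSpace X] (f : X ≃ₜ X) (K : Set X)
    (x : X) : ℕ :=
  sInf {j : ℕ | 0 < j ∧ (⇑f.symm)^[j] x ∈ interior K}

/-- `L(x) = {j ∈ ℤ : -ℓ⁻(x) < j < ℓ⁺(x), f^j(x) ∈ ∂K}`. -/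
noncomputable def Lset {X : Type*} [TopologicalSpace X] (f : X ≃ₜ X) (K : Set X)
    (x : X) : Set ℤ :=
  {j : ℤ | -(ellMinus f K x : ℤ) < j ∧ j < (ellPlus f K x : ℤ) ∧
    (f.toEquiv ^ j) x ∈ frontier K}

/-- `X_i = {x ∈ X : #L(x) ≥ i}`, the dynamical stratification associated to `K`. -/
noncomputable def stratum {X : Type*} [TopologicalSpace X] (f : X ≃ₜ X) (K : Set X)
    (i : ℕ) : Set X :=
  {x : X | i ≤ (Lset f K x).ncard}

theorem pow_iter {X : Type*} [TopologicalSpace X] (f : X ≃ₜ X) (n : ℕ) (x : X) :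
    (f.toEquiv ^ (n : ℤ)) x = (⇑f)^[n] x := by
  rw [zpow_natCast, ← Equiv.Perm.iterate_eq_pow]
  rfl

theorem neg_pow_iter {X : Type*} [TopologicalSpace X] (f : X ≃ₜ X) (n : ℕ) (x : X) :
    (f.toEquiv ^ (-(n : ℤ))) x = (⇑f.symm)^[n] x := by
  rw [zpow_neg, zpow_natCast, ← inv_pow, ← Equiv.Perm.iterate_eq_pow]
  rfl

theorem zpow_cont {X : Type*} [TopologicalSpace X] (f : X ≃ₜ X) (j : ℤ) :
    Continuous (fun x => (f.toEquiv ^ j) x) := by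
  obtain ⟨n, rfl | rfl⟩ := Int.eq_nat_or_neg j
  · simp only [pow_iter]
    exact f.continuous.iterate n
  · simp only [neg_pow_iter]
    exact f.symm.continuous.iterate n

theorem hit_bound {X : Type*} [TopologicalSpace X] [CompactSpace X]
    (f : X ≃ₜ X)
    (hmin : ∀ x : X, Dense (Set.range fun n : ℤ => (f.toEquiv ^ n) x))
    (K : Set X) (hK : (interior K).Nonempty) :
    ∃ N : ℕ, ∀ x : X, ∃ n : ℤ, -(N : ℤ) ≤ n ∧ n ≤ N ∧ (f.toEquiv ^ n) x ∈ interior K := by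
  obtain ⟨t, ht⟩ := isCompact_univ.elim_finite_subcover
    (fun n : ℤ => (fun x => (f.toEquiv ^ n) x) ⁻¹' interior K)
    (fun n => isOpen_interior.preimage (zpow_cont f n)) (by
      intro x _
      obtain ⟨y, hy, n, rfl⟩ := (hmin x).inter_open_nonempty _ isOpen_interior hK
      exact Set.mem_iUnion.2 ⟨n, hy⟩)
  refine ⟨t.sup Int.natAbs, fun x => ?_⟩
  obtain ⟨n, hn, hx⟩ := Set.mem_iUnion₂.1 (ht (Set.mem_univ x))
  have : n.natAbs ≤ t.sup Int.natAbs := Finset.le_sup (f := Int.natAbs) hn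
  exact ⟨n, by omega, by omega, hx⟩

/-- Each set `X_i` of the dynamical stratification is closed. -/
theorem stratum_isClosed
    {X : Type*} [TopologicalSpace X] [CompactSpace X] [T2Space X]
    (f : X ≃ₜ X)
    (hmin : ∀ x : X, Dense (Set.range fun n : ℤ => (f.toEquiv ^ n) x))
    (K : Set X) (hKc : IsCompact K) (hK : (interior K).Nonempty) :
    ∀ i : ℕ, IsClosed (stratum f K i) := by
  intro i
  obtain ⟨N, hN⟩ := hit_bound f hmin K hK
  rw [← isOpen_compl_iff, isOpen_iff_mem_nhds]
  intro x hx
  have hp : (⇑f)^[ellPlus f K x] x ∈ interior K := by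
    refine Nat.sInf_mem (s := {j : ℕ | (⇑f)^[j] x ∈ interior K}) ?_
    obtain ⟨n, h1, h2, h3⟩ := hN ((f.toEquiv ^ (N : ℤ)) x)
    refine ⟨(n + N).toNat, ?_⟩
    rw [← Equiv.Perm.mul_apply, ← zpow_add] at h3
    rw [Set.mem_setOf_eq, ← pow_iter, Int.toNat_of_nonneg (by omega)]
    exact h3
  have hm : 0 < ellMinus f K x ∧ (⇑f.symm)^[ellMinus f K x] x ∈ interior K := by
    refine Nat.sInf_mem (s := {j : ℕ | 0 < j ∧ (⇑f.symm)^[j] x ∈ interior K}) ?_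
    obtain ⟨n, h1, h2, h3⟩ := hN ((f.toEquiv ^ (-(N : ℤ) - 1)) x)
    refine ⟨(N + 1 - n).toNat, by omega, ?_⟩
    rw [← Equiv.Perm.mul_apply, ← zpow_add] at h3
    rw [← neg_pow_iter, Int.toNat_of_nonneg (by omega)]
    convert h3 using 3
    ring
  have hfin : (Lset f K x).Finite :=
    (Set.finite_Ioo (-(ellMinus f K x : ℤ)) (ellPlus f K x : ℤ)).subset
      fun j hj => ⟨hj.1, hj.2.1⟩
  have e1 : ∀ᶠ y in nhds x, (⇑f)^[ellPlus f K x] y ∈ interior K :=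
    (f.continuous.iterate _).continuousAt.eventually (isOpen_interior.mem_nhds hp)
  have e2 : ∀ᶠ y in nhds x, (⇑f.symm)^[ellMinus f K x] y ∈ interior K :=
    (f.symm.continuous.iterate _).continuousAt.eventually (isOpen_interior.mem_nhds hm.2)
  have e3 : ∀ᶠ y in nhds x, ∀ j ∈ Set.Ioo (-(ellMinus f K x : ℤ)) (ellPlus f K x : ℤ),
      (f.toEquiv ^ j) y ∈ frontier K → (f.toEquiv ^ j) x ∈ frontier K := by
    rw [Filter.eventually_all_finite (Set.finite_Ioo _ _)]
    intro j _
    by_cases h : (f.toEquiv ^ j) x ∈ frontier K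
    · exact Filter.Eventually.of_forall fun _ _ => h
    · filter_upwards [(zpow_cont f j).continuousAt.eventually
        (isClosed_frontier.isOpen_compl.mem_nhds h)] with y hy hy'
      exact absurd hy' hy
  filter_upwards [e1, e2, e3] with y h1 h2 h3 hy
  apply hx
  have l1 : ellPlus f K y ≤ ellPlus f K x := Nat.sInf_le h1
  have l2 : ellMinus f K y ≤ ellMinus f K x := Nat.sInf_le ⟨hm.1, h2⟩
  refine le_trans (show i ≤ (Lset f K y).ncard from hy) (Set.ncard_le_ncard ?_ hfin)
  rintro j ⟨a, b, c⟩
  have a' : -(ellMinus f K x : ℤ) < j := by omega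
  have b' : j < (ellPlus f K x : ℤ) := by omega
  exact ⟨a', b', h3 j ⟨a', b'⟩ c⟩
end

section
/- Let X be a compact Hausdorff topological space, f : X → X a minimal homeomorphism, and K ⊆ X a compact set with nonempty interior. Let m(K) be the least positive integer m such that X = ⋃_{j=0}^{m-1} f^{-j}(int K), and set N(K) = {j ∈ ℤ : −m(K) ≤ j ≤ m(K) − 1}. For x ∈ X define ℓ⁺(x) = min{j ≥ 0 : f^j(x) ∈ int K}, ℓ⁻(x) = min{j > 0 : f^{-j}(x) ∈ int K}, L(x) = {j ∈ ℤ : −ℓ⁻(x) < j < ℓ⁺(x) and f^j(x) ∈ ∂K}, M(x) = {j ∈ N(K) : f^j(x) ∈ ∂K}, X_i = {x : #L(x) ≥ i}, W_i = {x : #M(x) ≥ i}, and K_j = K ∩ X_j. Then for all integers i, j ≥ 0 one has: the closure of W_i \ K_j intersected with K_j is contained in W_{i+1}, i.e. cl(W_i \ K_j) ∩ K_j ⊆ W_{i+1}. -/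
/-- `m(K)`: the least positive `m` such that `X = ⋃_{j=0}^{m-1} f^{-j}(int K)`. -/
noncomputable def mOf {X : Type*} [TopologicalSpace X] (f : X ≃ₜ X) (K : Set X) : ℕ :=
  sInf {m : ℕ | 0 < m ∧ ∀ x : X, ∃ j < m, (⇑f)^[j] x ∈ interior K}

/-- `M(x) = {j ∈ N(K) : f^j(x) ∈ ∂K}` where `N(K) = {j ∈ ℤ : -m(K) ≤ j ≤ m(K) - 1}`. -/
noncomputable def Mset {X : Type*} [TopologicalSpace X] (f : X ≃ₜ X) (K : Set X)
    (x : X) : Set ℤ :=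
  {j : ℤ | -(mOf f K : ℤ) ≤ j ∧ j ≤ (mOf f K : ℤ) - 1 ∧ (f.toEquiv ^ j) x ∈ frontier K}

/-- `W_i = {x ∈ X : #M(x) ≥ i}`, the fine dynamical stratification associated to `K`. -/
noncomputable def fineStratum {X : Type*} [TopologicalSpace X] (f : X ≃ₜ X) (K : Set X)
    (i : ℕ) : Set X :=
  {x : X | i ≤ (Mset f K x).ncard}

theorem iter_eq_zpow {X : Type*} [TopologicalSpace X] (f : X ≃ₜ X) (j : ℕ) (x : X) :
    (⇑f)^[j] x = (f.toEquiv ^ (j : ℤ)) x := by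
  rw [zpow_natCast]
  exact congrFun (Equiv.Perm.iterate_eq_pow f.toEquiv j) x

theorem symm_iter_eq_zpow {X : Type*} [TopologicalSpace X] (f : X ≃ₜ X) (j : ℕ) (x : X) :
    (⇑f.symm)^[j] x = (f.toEquiv ^ (-(j : ℤ))) x := by
  rw [zpow_neg, zpow_natCast, ← inv_pow]
  exact congrFun (Equiv.Perm.iterate_eq_pow (f.toEquiv⁻¹ : Equiv.Perm X) j) x

theorem continuous_zpow_homeo {X : Type*} [TopologicalSpace X] (f : X ≃ₜ X) (k : ℤ) :
    Continuous (fun x => (f.toEquiv ^ k) x) := by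
  rcases Int.eq_nat_or_neg k with ⟨n, rfl | rfl⟩
  · simp only [← iter_eq_zpow]
    exact f.continuous.iterate n
  · simp only [← symm_iter_eq_zpow]
    exact f.symm.continuous.iterate n

theorem zpow_comp_apply {X : Type*} [TopologicalSpace X] (f : X ≃ₜ X) (a b : ℤ) (x : X) :
    (f.toEquiv ^ a) ((f.toEquiv ^ b) x) = (f.toEquiv ^ (a + b)) x := by
  rw [← Equiv.Perm.mul_apply, ← zpow_add]

theorem mOf_spec {X : Type*} [TopologicalSpace X] [CompactSpace X]
    (f : X ≃ₜ X)
    (hmin : ∀ x : X, Dense (Set.range fun n : ℤ => (f.toEquiv ^ n) x))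
    (K : Set X) (hK : (interior K).Nonempty) :
    0 < mOf f K ∧ ∀ x : X, ∃ j < mOf f K, (⇑f)^[j] x ∈ interior K := by
  have hne : {m : ℕ | 0 < m ∧ ∀ x : X, ∃ j < m, (⇑f)^[j] x ∈ interior K}.Nonempty := by
    obtain ⟨t, ht⟩ := isCompact_univ.elim_finite_subcover
      (fun n : ℤ => (fun x => (f.toEquiv ^ n) x) ⁻¹' interior K)
      (fun n => isOpen_interior.preimage (continuous_zpow_homeo f n))
      (by
        intro x _
        obtain ⟨_, h1, ⟨n, rfl⟩⟩ := (hmin x).inter_open_nonempty _ isOpen_interior hK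
        exact Set.mem_iUnion.2 ⟨n, h1⟩)
    obtain ⟨a, ha⟩ : ∃ a : ℕ, ∀ n ∈ t, n.natAbs ≤ a :=
      ⟨t.sup Int.natAbs, fun n hn => Finset.le_sup (f := Int.natAbs) hn⟩
    refine ⟨2 * a + 1, by omega, fun x => ?_⟩
    have hx := ht (Set.mem_univ ((f.toEquiv ^ (a : ℤ)) x))
    simp only [Set.mem_iUnion, Set.mem_preimage] at hx
    obtain ⟨n, hn, hx⟩ := hx
    have := ha n hn
    refine ⟨(n + a).toNat, by omega, ?_⟩
    rw [iter_eq_zpow, Int.toNat_of_nonneg (by omega)]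
    rwa [zpow_comp_apply] at hx
  exact Nat.sInf_mem hne

theorem ellPlus_spec {X : Type*} [TopologicalSpace X] (f : X ≃ₜ X) (K : Set X) (m : ℕ)
    (hm : ∀ x : X, ∃ j < m, (⇑f)^[j] x ∈ interior K) (x : X) :
    ellPlus f K x < m ∧ (f.toEquiv ^ (ellPlus f K x : ℤ)) x ∈ interior K := by
  obtain ⟨j, hj, hx⟩ := hm x
  have h1 : ellPlus f K x ≤ j := Nat.sInf_le hx
  have h2 : (⇑f)^[ellPlus f K x] x ∈ interior K :=
    Nat.sInf_mem (s := {j : ℕ | (⇑f)^[j] x ∈ interior K}) ⟨j, hx⟩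
  rw [iter_eq_zpow] at h2
  exact ⟨by omega, h2⟩

theorem ellMinus_spec {X : Type*} [TopologicalSpace X] (f : X ≃ₜ X) (K : Set X) (m : ℕ)
    (hm : ∀ x : X, ∃ j < m, (⇑f)^[j] x ∈ interior K) (x : X) :
    ellMinus f K x ≤ m ∧ 0 < ellMinus f K x ∧
      (f.toEquiv ^ (-(ellMinus f K x : ℤ))) x ∈ interior K := by
  obtain ⟨j, hj, hx⟩ := hm ((f.toEquiv ^ (-(m : ℤ))) x)
  rw [iter_eq_zpow, zpow_comp_apply] at hx
  have hx' : 0 < m - j ∧ (⇑f.symm)^[m - j] x ∈ interior K := by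
    refine ⟨by omega, ?_⟩
    rw [symm_iter_eq_zpow]
    convert hx using 3
    omega
  have h1 : ellMinus f K x ≤ m - j := Nat.sInf_le hx'
  have h2 : 0 < ellMinus f K x ∧ (⇑f.symm)^[ellMinus f K x] x ∈ interior K :=
    Nat.sInf_mem (s := {j : ℕ | 0 < j ∧ (⇑f.symm)^[j] x ∈ interior K}) ⟨m - j, hx'⟩
  rw [symm_iter_eq_zpow] at h2
  exact ⟨by omega, h2⟩

theorem ell_le_of_agree {X : Type*} [TopologicalSpace X] (f : X ≃ₜ X) (K : Set X) (m : ℕ)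
    (hm : ∀ x : X, ∃ j < m, (⇑f)^[j] x ∈ interior K) (x y : X)
    (h : ∀ k : ℤ, -(m : ℤ) ≤ k → k ≤ (m : ℤ) - 1 →
      (f.toEquiv ^ k) x ∈ interior K → (f.toEquiv ^ k) y ∈ interior K) :
    ellPlus f K y ≤ ellPlus f K x ∧ ellMinus f K y ≤ ellMinus f K x := by
  obtain ⟨p1, p2⟩ := ellPlus_spec f K m hm x
  obtain ⟨q1, q2, q3⟩ := ellMinus_spec f K m hm x
  constructor
  · refine Nat.sInf_le ?_
    change (⇑f)^[ellPlus f K x] y ∈ interior K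
    rw [iter_eq_zpow]
    exact h _ (by omega) (by omega) p2
  · refine Nat.sInf_le ⟨q2, ?_⟩
    rw [symm_iter_eq_zpow]
    exact h _ (by omega) (by omega) q3

/-- (Lemma A.3 of the paper.) With `K_j = K ∩ X_j`, for all `i, j ≥ 0`
one has `cl(W_i \ K_j) ∩ K_j ⊆ W_{i+1}`. -/
theorem closure_fineStratum_diff_inter_subset
    {X : Type*} [TopologicalSpace X] [CompactSpace X] [T2Space X]
    (f : X ≃ₜ X)
    (hmin : ∀ x : X, Dense (Set.range fun n : ℤ => (f.toEquiv ^ n) x))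
    (K : Set X) (hKc : IsCompact K) (hK : (interior K).Nonempty) :
    ∀ i j : ℕ,
      closure (fineStratum f K i \ (K ∩ stratum f K j)) ∩ (K ∩ stratum f K j) ⊆
        fineStratum f K (i + 1) := by
  rintro i j x ⟨hcl, hxK, hxj⟩
  obtain ⟨hm0, hm⟩ := mOf_spec f hmin K hK
  have hclosed : IsClosed K := hKc.isClosed
  have hfr : ∀ z, z ∈ frontier K ↔ z ∈ K ∧ z ∉ interior K := fun z => by
    rw [hclosed.frontier_eq, Set.mem_sdiff]
  by_contra hx
  have hx : (Mset f K x).ncard ≤ i := by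
    have : ¬ (i + 1 ≤ (Mset f K x).ncard) := hx
    omega
  have hev : ∀ᶠ y in nhds x, ∀ k ∈ Finset.Icc (-(mOf f K : ℤ)) ((mOf f K : ℤ) - 1),
      ((f.toEquiv ^ k) x ∈ interior K → (f.toEquiv ^ k) y ∈ interior K) ∧
      ((f.toEquiv ^ k) x ∉ K → (f.toEquiv ^ k) y ∉ K) := by
    rw [Filter.eventually_all_finset]
    intro k _
    have hc := (continuous_zpow_homeo f k).continuousAt (x := x)
    refine Filter.Eventually.and ?_ ?_
    · by_cases h : (f.toEquiv ^ k) x ∈ interior K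
      · filter_upwards [hc.eventually (isOpen_interior.mem_nhds h)] with y hy _ using hy
      · exact Filter.Eventually.of_forall fun y h' => absurd h' h
    · by_cases h : (f.toEquiv ^ k) x ∈ K
      · exact Filter.Eventually.of_forall fun y h' => absurd h h'
      · filter_upwards [hc.eventually (hclosed.isOpen_compl.mem_nhds h)] with y hy _ using hy
  obtain ⟨y, ⟨hyW, hyK⟩, hy⟩ :=
    ((mem_closure_iff_frequently.1 hcl).and_eventually hev).exists
  have hy' : ∀ k : ℤ, -(mOf f K : ℤ) ≤ k → k ≤ (mOf f K : ℤ) - 1 → _ :=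
    fun k h1 h2 => hy k (Finset.mem_Icc.2 ⟨h1, h2⟩)
  have hsub : Mset f K y ⊆ Mset f K x := by
    rintro k ⟨h1, h2, h3⟩
    refine ⟨h1, h2, ?_⟩
    rw [hfr] at h3 ⊢
    have := hy' k h1 h2
    tauto
  have hfin : (Mset f K x).Finite :=
    (Set.finite_Icc (-(mOf f K : ℤ)) ((mOf f K : ℤ) - 1)).subset fun k hk => ⟨hk.1, hk.2.1⟩
  have hMeq : Mset f K y = Mset f K x :=
    Set.eq_of_subset_of_ncard_le hsub (hx.trans hyW) hfin
  have hF : ∀ k : ℤ, -(mOf f K : ℤ) ≤ k → k ≤ (mOf f K : ℤ) - 1 →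
      (f.toEquiv ^ k) x ∈ frontier K → (f.toEquiv ^ k) y ∈ frontier K := by
    intro k h1 h2 h3
    have : k ∈ Mset f K x := ⟨h1, h2, h3⟩
    rw [← hMeq] at this
    exact this.2.2
  have hback : ∀ k : ℤ, -(mOf f K : ℤ) ≤ k → k ≤ (mOf f K : ℤ) - 1 →
      (f.toEquiv ^ k) y ∈ interior K → (f.toEquiv ^ k) x ∈ interior K := by
    intro k h1 h2 h3
    have a := hF k h1 h2
    have b := hy' k h1 h2
    have c := interior_subset h3
    rw [hfr, hfr] at a
    tauto
  obtain ⟨a1, a2⟩ := ell_le_of_agree f K _ hm x y (fun k h1 h2 => (hy' k h1 h2).1)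
  obtain ⟨b1, b2⟩ := ell_le_of_agree f K _ hm y x hback
  have hp := (ellPlus_spec f K _ hm y).1
  have hq := (ellMinus_spec f K _ hm y).1
  apply hyK
  constructor
  · have a := hF 0 (by omega) (by omega)
    have b := (hy' 0 (by omega) (by omega)).1
    simp only [zpow_zero, Equiv.Perm.one_apply, hfr] at a b
    by_cases h : x ∈ interior K
    · exact interior_subset (b h)
    · exact (a ⟨hxK, h⟩).1
  · refine le_trans hxj (Set.ncard_le_ncard ?_ ?_)
    · rintro k ⟨h1, h2, h3⟩
      exact ⟨by omega, by omega, hF k (by omega) (by omega) h3⟩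
    · exact (Set.finite_Ioo (-(ellMinus f K y : ℤ)) (ellPlus f K y : ℤ)).subset
        fun k hk => ⟨hk.1, hk.2.1⟩
end
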